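/- arXiv:2002.07528 — 3 statements merged into one kernel-verified Lean document; each statement's English description precedes it below -/
import Mathlib

section
/- (Theorem 1, universal approximation, Pinkus.) Let σ : ℝ → ℝ be a continuous activation function that is not a polynomial, let d ≥ 1, and let K ⊂ ℝ^d be compact. Then for every continuous function f : K → ℝ and every ε > 0 there exist N ∈ ℕ and real coefficients c_i, h_i and vectors w_i ∈ ℝ^d (i = 1,…,N) such that sup_{x ∈ K} | f(x) − ∑_{i=1}^{N} c_i σ(⟨w_i, x⟩ + h_i) | < ε. -/
/-!
Let `W` be the closure of the networks in `C(X, ℝ)`, and let `v` be a linear feature, so that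
`σ ∘ (a • v + b)` lies in `W` for all real `a` and `b`. Convolving `σ` with a smooth bump function
`φ` averages such functions over `b`, and differentiating a curve in the closed subspace `W` keeps
it in `W`. Differentiating `a ↦ (φ ⋆ σ) ∘ (a • v + b)` `k` times at `a = 0` therefore gives
`(φ ⋆ σ)⁽ᵏ⁾(b) • v ^ k ∈ W`. If `v ^ k ∉ W`, every mollification `φ ⋆ σ` has vanishing `k`-th
derivative, hence is a polynomial of degree less than `k`; these form a finite-dimensional, so
closed, space of functions, which then contains the limit `σ`. Thus for non-polynomial `σ` all
powers `v ^ k`, and with them `exp v`, lie in `W`. Since `exp u * exp v = exp (u + v)`, the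
exponentials span an algebra, and Stone–Weierstrass gives `W = C(X, ℝ)`.
-/

namespace UniversalApproximation

open Polynomial MeasureTheory Filter Topology ContinuousMap ContinuousLinearMap
open scoped Convolution ContDiff

lemma deriv_mem_of_isClosed {𝕜 F : Type*} [NontriviallyNormedField 𝕜] [NormedAddCommGroup F]
    [NormedSpace 𝕜 F] {W : Submodule 𝕜 F} (hW : IsClosed (W : Set F)) {f : 𝕜 → F}
    (hf : ∀ t, f t ∈ W) (t : 𝕜) : deriv f t ∈ W := by
  have hspan : Submodule.span 𝕜 (f '' Set.univ) ≤ W := by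
    simpa [Submodule.span_le, Set.range_subset_iff] using hf
  exact closure_minimal hspan hW
    (range_deriv_subset_closure_span_image f dense_univ (Set.mem_range_self t))

lemma integral_mem_of_isClosed {α E : Type*} [MeasurableSpace α] {μ : Measure α}
    [NormedAddCommGroup E] [NormedSpace ℝ E] [CompleteSpace E] {W : Submodule ℝ E}
    (hW : IsClosed (W : Set E)) {f : α → E} (hf : ∀ᵐ a ∂μ, f a ∈ W) : ∫ a, f a ∂μ ∈ W := by
  by_cases hfi : Integrable f μ
  · rw [← Submodule.Quotient.mk_eq_zero]
    calc W.mkQL (∫ a, f a ∂μ) = ∫ a, W.mkQL (f a) ∂μ := (W.mkQL.integral_comp_comm hfi).symm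
      _ = 0 := integral_eq_zero_of_ae (hf.mono fun a ha => by simpa using ha)
  · rw [integral_undef hfi]
    exact W.zero_mem

/-- The functions `R → R` given by polynomials of degree less than `n`, as a subspace of the space
of all functions, whose topology is that of pointwise convergence. -/
noncomputable def polynomialFunctionsLT (R : Type*) [CommSemiring R] (n : ℕ) :
    Submodule R (R → R) :=
  (degreeLT R n).map (LinearMap.pi leval)

lemma isClosed_polynomialFunctionsLT (𝕜 : Type*) [NontriviallyNormedField 𝕜] [CompleteSpace 𝕜]
    (n : ℕ) : IsClosed (polynomialFunctionsLT 𝕜 n : Set (𝕜 → 𝕜)) := by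
  unfold polynomialFunctionsLT
  exact Submodule.closed_of_finiteDimensional _

lemma mem_polynomialFunctionsLT_of_iteratedDeriv_eq_zero {n : ℕ} {f : ℝ → ℝ}
    (hf : ContDiff ℝ n f) (hfn : ∀ t, iteratedDeriv n f t = 0) : f ∈ polynomialFunctionsLT ℝ n := by
  obtain _ | n := n
  · obtain rfl : f = 0 := by simpa [funext_iff] using hfn
    exact zero_mem _
  have taylor (t : ℝ) :
      f t = ∑ k ∈ Finset.range (n + 1), (k.factorial : ℝ)⁻¹ * (t ^ k * iteratedDeriv k f 0) := by
    have h := map_add_eq_sum_add_integral_iteratedFDeriv (x := 0) (y := t) (n := n)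
      fun s _ => by exact_mod_cast hf.contDiffAt
    simpa [iteratedFDeriv_apply_eq_iteratedDeriv_mul_prod, hfn] using h
  refine ⟨∑ k ∈ Finset.range (n + 1), monomial k ((k.factorial : ℝ)⁻¹ * iteratedDeriv k f 0),
    ?_, ?_⟩
  · exact sum_mem fun k hk => monomial_coe_mem_degreeLT ⟨k, Finset.mem_range.1 hk⟩ _
  · ext t
    simp only [LinearMap.pi_apply, leval_apply, eval_finsetSum, eval_monomial, taylor t]
    exact Finset.sum_congr rfl fun k _ => by ring

lemma exists_contDiff_convolution_tendsto {G E : Type*} [NormedAddCommGroup G] [NormedSpace ℝ G]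
    [HasContDiffBump G] [FiniteDimensional ℝ G] [MeasurableSpace G] [BorelSpace G]
    (μ : Measure G) [μ.IsAddHaarMeasure] [NormedAddCommGroup E] [NormedSpace ℝ E] [CompleteSpace E]
    {f : G → E} (hf : Continuous f) :
    ∃ φ : ℕ → G → ℝ, (∀ n, ContDiff ℝ ∞ (φ n)) ∧ (∀ n, HasCompactSupport (φ n)) ∧
      ∀ t, Tendsto (fun n => (φ n ⋆[lsmul ℝ ℝ, μ] f) t) atTop (𝓝 (f t)) := by
  let bump (n : ℕ) : ContDiffBump (0 : G) :=
    ⟨1 / (n + 1) / 2, 1 / (n + 1), by positivity, half_lt_self (by positivity)⟩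
  exact ⟨fun n => (bump n).normed μ, fun n => (bump n).contDiff_normed,
    fun n => (bump n).hasCompactSupport_normed,
    ContDiffBump.convolution_tendsto_right_of_continuous tendsto_one_div_add_atTop_nhds_zero_nat hf⟩

lemma exp_mem_of_forall_pow_mem {𝕂 𝔸 : Type*} [RCLike 𝕂] [NormedRing 𝔸] [NormedAlgebra 𝕂 𝔸]
    [CompleteSpace 𝔸] {W : Submodule 𝕂 𝔸} (hW : IsClosed (W : Set 𝔸)) {v : 𝔸}
    (hv : ∀ k : ℕ, v ^ k ∈ W) : NormedSpace.exp v ∈ W :=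
  hW.mem_of_tendsto (NormedSpace.exp_series_hasSum_exp' (𝕂 := 𝕂) v) <|
    .of_forall fun _ => W.sum_mem fun k _ => W.smul_mem _ (hv k)

section CompactSpace

variable {X : Type*} [TopologicalSpace X] [CompactSpace X]

lemma hasDerivAt_of_forall_apply {E : Type*} [NormedAddCommGroup E] [NormedSpace ℝ E]
    [CompleteSpace E] {γ γ' : ℝ → C(X, E)} (hγ' : Continuous γ')
    (h : ∀ x t, HasDerivAt (fun s => γ s x) (γ' t x) t) (t : ℝ) : HasDerivAt γ (γ' t) t := by
  have hγ : γ = fun t => γ 0 + ∫ s in 0..t, γ' s := by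
    ext t x
    have hint : IntervalIntegrable γ' volume 0 t := hγ'.intervalIntegrable 0 t
    have hx : (∫ s in 0..t, γ' s) x = ∫ s in 0..t, γ' s x :=
      ((evalCLM ℝ x).intervalIntegral_comp_comm hint).symm
    have hintx : IntervalIntegrable (fun s => γ' s x) volume 0 t :=
      ((evalCLM ℝ x).continuous.comp hγ').intervalIntegrable 0 t
    rw [ContinuousMap.add_apply, hx,
      intervalIntegral.integral_eq_sub_of_hasDerivAt (fun s _ => h x s) hintx]
    abel
  rw [hγ]
  exact (hγ'.integral_hasStrictDerivAt 0 t).hasDerivAt.const_add (γ 0)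

lemma hasDerivAt_comp_smul_add {f f' : C(ℝ, ℝ)} (hf : ∀ t, HasDerivAt f (f' t) t)
    (v y : C(X, ℝ)) (a : ℝ) :
    HasDerivAt (fun a : ℝ => f.comp (a • v + y)) (v * f'.comp (a • v + y)) a := by
  refine hasDerivAt_of_forall_apply (γ' := fun a => v * f'.comp (a • v + y)) ?_ (fun x t => ?_) a
  · exact continuous_const.mul (f'.continuous_postcomp.comp (by fun_prop))
  · have hline : HasDerivAt (fun s => s * v x + y x) (v x) t := by
      simpa using ((hasDerivAt_id t).mul_const (v x)).add_const (y x)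
    exact ((hf _).comp t hline).congr_deriv (mul_comm _ _)

variable {W : Submodule ℝ C(X, ℝ)}

lemma convolution_comp_mem (hW : IsClosed (W : Set C(X, ℝ))) {φ : ℝ → ℝ} (hφ : Continuous φ)
    (hφc : HasCompactSupport φ) {σ τ : C(ℝ, ℝ)} (hτ : ⇑τ = φ ⋆[lsmul ℝ ℝ] σ) {y : C(X, ℝ)}
    (hy : ∀ s, σ.comp (y - const X s) ∈ W) : τ.comp y ∈ W := by
  have hint : Integrable fun s => φ s • σ.comp (y - const X s) := by
    refine Continuous.integrable_of_hasCompactSupport (hφ.smul ?_) hφc.smul_right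
    exact σ.continuous_postcomp.comp (continuous_const.sub continuous_const')
  have heq : τ.comp y = ∫ s, φ s • σ.comp (y - const X s) := by
    ext x
    rw [ContinuousMap.integral_apply hint, ContinuousMap.comp_apply, hτ]
    rfl
  rw [heq]
  exact integral_mem_of_isClosed hW (.of_forall fun s => W.smul_mem _ (hy s))

lemma pow_mul_comp_mem (hW : IsClosed (W : Set C(X, ℝ))) {g : ℕ → C(ℝ, ℝ)}
    (hg : ∀ k t, HasDerivAt (g k) (g (k + 1) t) t) {v y : C(X, ℝ)}
    (h : ∀ a : ℝ, (g 0).comp (a • v + y) ∈ W) (k : ℕ) (a : ℝ) :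
    v ^ k * (g k).comp (a • v + y) ∈ W := by
  induction k generalizing a with
  | zero => simpa using h a
  | succ k ih =>
    have hderiv := (hasDerivAt_comp_smul_add (hg k) v y a).const_mul (v ^ k)
    rw [pow_succ, mul_assoc, ← hderiv.deriv]
    exact deriv_mem_of_isClosed hW ih a

lemma pow_mem_of_iteratedDeriv_ne_zero (hW : IsClosed (W : Set C(X, ℝ))) {τ : C(ℝ, ℝ)}
    (hτ : ContDiff ℝ ∞ τ) {k : ℕ} {b : ℝ} (hb : iteratedDeriv k τ b ≠ 0) {v : C(X, ℝ)}
    (h : ∀ a : ℝ, τ.comp (a • v + const X b) ∈ W) : v ^ k ∈ W := by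
  have hk (k : ℕ) : ContDiff ℝ ∞ (iteratedDeriv k τ) := by
    simpa only [iteratedDeriv_eq_iterate] using hτ.iterate_deriv k
  let g (k : ℕ) : C(ℝ, ℝ) := ⟨iteratedDeriv k τ, (hk k).continuous⟩
  have hg (k : ℕ) (t : ℝ) : HasDerivAt (g k) (g (k + 1) t) t := by
    have := ((hk k).differentiable (by simp) t).hasDerivAt
    rwa [← iteratedDeriv_succ] at this
  have hg0 : g 0 = τ := by ext; simp [g]
  have hmem : v ^ k * (g k).comp ((0 : ℝ) • v + const X b) ∈ W :=
    pow_mul_comp_mem hW hg (fun a => by simpa only [hg0] using h a) k 0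
  have hconst : v ^ k * (g k).comp ((0 : ℝ) • v + const X b) = iteratedDeriv k τ b • v ^ k := by
    ext x
    simp [g, mul_comm]
  rwa [hconst, W.smul_mem_iff hb] at hmem

lemma pow_mem_of_not_polynomial (hW : IsClosed (W : Set C(X, ℝ))) {σ : C(ℝ, ℝ)}
    (hσ : ¬ ∃ p : ℝ[X], ∀ t, σ t = p.eval t) {v : C(X, ℝ)}
    (h : ∀ a b : ℝ, σ.comp (a • v + const X b) ∈ W) (k : ℕ) : v ^ k ∈ W := by
  by_contra hk
  obtain ⟨φ, hφ, hφc, hlim⟩ := exists_contDiff_convolution_tendsto volume σ.continuous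
  have hpoly (n : ℕ) : φ n ⋆[lsmul ℝ ℝ] σ ∈ polynomialFunctionsLT ℝ k := by
    have hsmooth : ContDiff ℝ ∞ (φ n ⋆[lsmul ℝ ℝ] σ) :=
      (hφc n).contDiff_convolution_left _ (hφ n) σ.continuous.locallyIntegrable
    let τ : C(ℝ, ℝ) := ⟨φ n ⋆[lsmul ℝ ℝ] σ, hsmooth.continuous⟩
    have hτ (a b : ℝ) : τ.comp (a • v + const X b) ∈ W :=
      convolution_comp_mem hW (hφ n).continuous (hφc n) rfl fun s => by
        rw [add_sub_assoc]
        exact h a (b - s)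
    refine mem_polynomialFunctionsLT_of_iteratedDeriv_eq_zero (hsmooth.of_le (mod_cast le_top)) ?_
    by_contra! ⟨b, hb⟩
    exact hk (pow_mem_of_iteratedDeriv_ne_zero (τ := τ) hW hsmooth hb fun a => hτ a b)
  obtain ⟨p, -, hp⟩ := (isClosed_polynomialFunctionsLT ℝ k).mem_of_tendsto
    (tendsto_pi_nhds.2 hlim) (.of_forall hpoly)
  exact hσ ⟨p, fun t => (congrFun hp t).symm⟩

lemma continuousMap_exp_apply (v : C(X, ℝ)) (x : X) : NormedSpace.exp v x = Real.exp (v x) := by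
  rw [Real.exp_eq_exp_ℝ]
  exact NormedSpace.map_exp (evalAlgHom ℝ ℝ x) (continuous_eval_const x) v

lemma eq_top_of_forall_pow_mem (hW : IsClosed (W : Set C(X, ℝ))) {L : AddSubmonoid C(X, ℝ)}
    (hL : ((⇑) '' (L : Set C(X, ℝ))).SeparatesPoints) (h : ∀ v ∈ L, ∀ k : ℕ, v ^ k ∈ W) :
    W = ⊤ := by
  let M : Submonoid C(X, ℝ) :=
    { carrier := NormedSpace.exp '' L
      one_mem' := ⟨0, L.zero_mem, NormedSpace.exp_zero⟩
      mul_mem' := by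
        rintro _ _ ⟨u, hu, rfl⟩ ⟨v, hv, rfl⟩
        exact ⟨u + v, L.add_mem hu hv, NormedSpace.exp_add⟩ }
  let A : Subalgebra ℝ C(X, ℝ) := Algebra.adjoin ℝ M
  have hA : Subalgebra.toSubmodule A ≤ W := by
    rw [Algebra.adjoin_eq_span, Submonoid.closure_eq, Submodule.span_le]
    rintro _ ⟨v, hv, rfl⟩
    exact exp_mem_of_forall_pow_mem hW (h v hv)
  have hsep : A.SeparatesPoints := by
    intro x y hxy
    obtain ⟨_, ⟨v, hv, rfl⟩, hne⟩ := hL hxy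
    refine ⟨_, ⟨NormedSpace.exp v, Algebra.subset_adjoin ⟨v, hv, rfl⟩, rfl⟩, ?_⟩
    simpa only [continuousMap_exp_apply, ne_eq, Real.exp_eq_exp] using hne
  exact eq_top_iff.2 fun f _ => closure_minimal hA hW
    (continuousMap_mem_subalgebra_closure_of_separatesPoints A hsep f)

end CompactSpace

section ShallowNetworks

variable {X V : Type*} [TopologicalSpace X] [AddCommGroup V] [Module ℝ V]

/-- One-hidden-layer networks `x ↦ ∑ i, c i * σ (B (w i) x + h i)` with activation `σ`, as the span
of single neurons. The weights range over an abstract space `V`, acting on inputs through the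
linear family of features `B`; networks on `ℝ^d` are the case `B w x = ⟨w, x⟩`. -/
def shallowNetworks (σ : C(ℝ, ℝ)) (B : V →ₗ[ℝ] C(X, ℝ)) : Submodule ℝ C(X, ℝ) :=
  Submodule.span ℝ (Set.range fun p : V × ℝ => σ.comp (B p.1 + const X p.2))

lemma exists_eq_sum_of_mem_shallowNetworks {σ : C(ℝ, ℝ)} {B : V →ₗ[ℝ] C(X, ℝ)}
    {g : C(X, ℝ)} (hg : g ∈ shallowNetworks σ B) :
    ∃ (N : ℕ) (c h : Fin N → ℝ) (w : Fin N → V), ∀ x, g x = ∑ i, c i * σ (B (w i) x + h i) := by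
  obtain ⟨N, c, neuron, rfl⟩ := Submodule.mem_span_set'.1 hg
  choose p hp using fun i => (neuron i).2
  exact ⟨N, c, fun i => (p i).2, fun i => (p i).1, fun x => by simp [← hp]⟩

theorem topologicalClosure_shallowNetworks_eq_top [CompactSpace X] {σ : C(ℝ, ℝ)}
    (hσ : ¬ ∃ p : ℝ[X], ∀ t, σ t = p.eval t) {B : V →ₗ[ℝ] C(X, ℝ)}
    (hB : (Set.range fun w => ⇑(B w)).SeparatesPoints) :
    (shallowNetworks σ B).topologicalClosure = ⊤ := by
  have hclosed := (shallowNetworks σ B).isClosed_topologicalClosure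
  have hneuron (w : V) (b : ℝ) :
      σ.comp (B w + const X b) ∈ (shallowNetworks σ B).topologicalClosure :=
    Submodule.le_topologicalClosure _ (Submodule.subset_span ⟨(w, b), rfl⟩)
  refine eq_top_of_forall_pow_mem hclosed (L := B.range.toAddSubmonoid) ?_ ?_
  · simpa [LinearMap.coe_range, ← Set.range_comp, Function.comp_def] using hB
  · rintro _ ⟨w, rfl⟩
    exact pow_mem_of_not_polynomial hclosed hσ fun a b => by simpa using hneuron (a • w) b

end ShallowNetworks

/-- The linear functions `x ↦ ⟨w, x⟩` on `K ⊆ ℝ^ι`, as features depending linearly on the weight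
vector `w`. -/
def dotProductMap {ι : Type*} [Fintype ι] (K : Set (ι → ℝ)) : (ι → ℝ) →ₗ[ℝ] C(K, ℝ) where
  toFun w := ⟨fun x => w ⬝ᵥ x, by fun_prop⟩
  map_add' u v := by ext x; exact add_dotProduct u v x
  map_smul' a w := by ext x; exact smul_dotProduct a w x

lemma separatesPoints_dotProductMap {ι : Type*} [Fintype ι] (K : Set (ι → ℝ)) :
    (Set.range fun w => ⇑(dotProductMap K w)).SeparatesPoints := by
  classical
  intro x y hxy
  obtain ⟨j, hj⟩ := Function.ne_iff.1 (Subtype.coe_injective.ne hxy)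
  exact ⟨_, ⟨Pi.single j 1, rfl⟩, by simpa [dotProductMap] using hj⟩

end UniversalApproximation

open UniversalApproximation in
theorem pinkus_universal_approximation_general {X V : Type*} [TopologicalSpace X] [CompactSpace X]
    [AddCommGroup V] [Module ℝ V] {σ : C(ℝ, ℝ)} (hσ : ¬ ∃ p : Polynomial ℝ, ∀ t, σ t = p.eval t)
    {B : V →ₗ[ℝ] C(X, ℝ)} (hB : (Set.range fun w => ⇑(B w)).SeparatesPoints)
    (f : C(X, ℝ)) {ε : ℝ} (hε : 0 < ε) :
    ∃ (N : ℕ) (c h : Fin N → ℝ) (w : Fin N → V),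
      ∀ x, |f x - ∑ i, c i * σ (B (w i) x + h i)| < ε := by
  have hf : f ∈ closure (shallowNetworks σ B : Set C(X, ℝ)) := by
    simp [← Submodule.topologicalClosure_coe, topologicalClosure_shallowNetworks_eq_top hσ hB]
  obtain ⟨g, hg, hfg⟩ := Metric.mem_closure_iff.1 hf ε hε
  obtain ⟨N, c, h, w, hgx⟩ := exists_eq_sum_of_mem_shallowNetworks hg
  refine ⟨N, c, h, w, fun x => ?_⟩
  rw [← hgx, ← Real.dist_eq]
  exact (ContinuousMap.dist_apply_le_dist x).trans_lt hfg

/-- Theorem 1 (Pinkus universal approximation): a continuous non-polynomial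
activation `σ` yields one-hidden-layer networks
`x ↦ ∑_i c_i σ(⟨w_i, x⟩ + h_i)` that approximate any continuous function
uniformly on a compact set `K ⊆ ℝ^d`. -/
theorem pinkus_universal_approximation
    (σ : ℝ → ℝ) (hσc : Continuous σ)
    (hσp : ¬ ∃ p : Polynomial ℝ, ∀ t : ℝ, σ t = Polynomial.eval t p)
    (d : ℕ) (hd : 1 ≤ d)
    (K : Set (Fin d → ℝ)) (hK : IsCompact K)
    (f : (Fin d → ℝ) → ℝ) (hf : ContinuousOn f K)
    (ε : ℝ) (hε : 0 < ε) :
    ∃ (N : ℕ) (c h : Fin N → ℝ) (w : Fin N → Fin d → ℝ),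
      ∀ x ∈ K, |f x - ∑ i : Fin N, c i * σ ((∑ j : Fin d, w i j * x j) + h i)| < ε := by
  have : CompactSpace K := isCompact_iff_compactSpace.1 hK
  simpa [UniversalApproximation.dotProductMap, dotProduct] using
    pinkus_universal_approximation_general (σ := ⟨σ, hσc⟩) hσp
      (UniversalApproximation.separatesPoints_dotProductMap K) ⟨K.domRestrict f, hf.domRestrict⟩ hε
end

section
/- (Theorem 2, invariant universal approximation, Yarotsky.) Let σ : ℝ → ℝ be a continuous activation function that is not a polynomial. Let G be a finite group acting linearly on W = ℝ^d, and let f_1,…,f_{N_inv} : W → ℝ be polynomial functions, each G-invariant, which generate the ℝ-algebra of all G-invariant polynomial functions on W. Let K ⊂ W be a compact G-stable set and let f : K → ℝ be continuous and G-invariant. Then for every ε > 0 there exist N ∈ ℕ and real coefficients c_i, w_{ij}, h_i such that the G-invariant function f̂(x) = ∑_{i=1}^{N} c_i σ(∑_{j=1}^{N_inv} w_{ij} f_j(x) + h_i) satisfies sup_{x ∈ K} |f(x) − f̂(x)| < ε. -/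
/-!
The closed span `M` of the functions `σ ∘ u`, with `u` in the space `U` of affine combinations of
the generators, is stable under mollifying `σ`, because `U` contains the constants, and under
differentiating `s ↦ g ∘ (u + s • v)` when `g` is a smooth mollification of `σ`. Differentiating
`n` times shows that `M` contains `p * (g⁽ⁿ⁾ ∘ u)` for every product `p` of `n` elements of `U`;
taking `u` constant, `M` contains `p` itself unless `g⁽ⁿ⁾ = 0`. If that failed for every
mollification, each would be a polynomial of degree less than `n`, and so would their pointwise
limit `σ`. So `M` contains the algebra generated by `U`, which, by Stone-Weierstrass and
averaging over `G`, is dense in the continuous invariant functions.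
-/

open Filter MeasureTheory Polynomial Topology
open scoped ContDiff Convolution

namespace ShallowNetwork

section ContinuousMap

variable {X : Type*} [TopologicalSpace X]

theorem mvPolynomial_aeval_apply {ι : Type*} (F : ι → C(X, ℝ)) (q : MvPolynomial ι ℝ) (x : X) :
    MvPolynomial.aeval F q x = MvPolynomial.eval (fun j ↦ F j x) q := by
  rw [← MvPolynomial.coe_aeval_eq_eval]
  exact MvPolynomial.comp_aeval_apply (φ := ContinuousMap.evalAlgHom ℝ ℝ x) F q

variable [CompactSpace X]

theorem hasDerivAt_of_forall_hasDerivAt_apply {a a' : ℝ → C(X, ℝ)} (ha' : Continuous a')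
    (h : ∀ x s, HasDerivAt (fun r ↦ a r x) (a' s x) s) (s₀ : ℝ) : HasDerivAt a (a' s₀) s₀ := by
  have eq_integral : a = fun s ↦ a s₀ + ∫ r in s₀..s, a' r := by
    ext s x
    have integral_apply : ∫ r in s₀..s, a' r x = (∫ r in s₀..s, a' r) x :=
      (ContinuousMap.evalCLM ℝ x).intervalIntegral_comp_comm (ha'.intervalIntegrable s₀ s)
    have integral_eq_sub : ∫ r in s₀..s, a' r x = a s x - a s₀ x :=
      intervalIntegral.integral_eq_sub_of_hasDerivAt (fun r _ ↦ h x r)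
        (((ContinuousMap.evalCLM ℝ x).continuous.comp ha').intervalIntegrable _ _)
    rw [ContinuousMap.add_apply, ← integral_apply, integral_eq_sub, add_sub_cancel]
  rw [eq_integral]
  exact (ha'.integral_hasStrictDerivAt s₀ s₀).hasDerivAt.const_add _

theorem hasDerivAt_comp_add_smul {g g' : C(ℝ, ℝ)} (hg : ∀ t, HasDerivAt g (g' t) t)
    (u v : C(X, ℝ)) (s : ℝ) :
    HasDerivAt (fun r : ℝ ↦ g.comp (u + r • v)) (v * g'.comp (u + s • v)) s := by
  refine hasDerivAt_of_forall_hasDerivAt_apply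
    (a' := fun r : ℝ ↦ v * g'.comp (u + r • v)) ?_ (fun x r ↦ ?_) s
  · exact continuous_const.mul ((ContinuousMap.continuous_postcomp g').comp (by fun_prop))
  · have hline : HasDerivAt (fun r ↦ u x + r * v x) (v x) r := by
      simpa using ((hasDerivAt_id r).mul_const (v x)).const_add (u x)
    simpa [mul_comm, Function.comp_def] using (hg (u x + r * v x)).comp r hline

end ContinuousMap

section ClosedSubmodule

variable {E : Type*} [NormedAddCommGroup E] [NormedSpace ℝ E] {M : Submodule ℝ E}

theorem hasDerivAt_mem_of_isClosed (hM : IsClosed (M : Set E)) {a : ℝ → E} {a' : E} {s : ℝ}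
    (ha : ∀ r, a r ∈ M) (h : HasDerivAt a a' s) : a' ∈ M :=
  hM.mem_of_tendsto (hasDerivAt_iff_tendsto_slope.1 h) <|
    Eventually.of_forall fun r ↦ M.smul_mem _ (M.sub_mem (ha r) (ha s))

theorem integral_mem_of_isClosed [CompleteSpace E] (hM : IsClosed (M : Set E)) {α : Type*}
    [MeasurableSpace α] {μ : Measure α} {f : α → E} (hf : ∀ t, f t ∈ M) : ∫ t, f t ∂μ ∈ M := by
  have : CompleteSpace M := hM.completeSpace_coe
  have integral_eq : ∫ t, f t ∂μ = ((∫ t, (⟨f t, hf t⟩ : M) ∂μ : M) : E) :=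
    M.subtypeₗᵢ.integral_comp_comm fun t ↦ ⟨f t, hf t⟩
  exact integral_eq ▸ Subtype.coe_prop _

end ClosedSubmodule

section Polynomial

theorem exists_degreeLT_of_iteratedDeriv_eq_zero {n : ℕ} {g : ℝ → ℝ} (hg : ContDiff ℝ n g)
    (h : ∀ t, iteratedDeriv n g t = 0) : ∃ p ∈ degreeLT ℝ n, ∀ t, g t = p.eval t := by
  cases n with
  | zero => exact ⟨0, zero_mem _, by simpa using h⟩
  | succ n =>
    refine ⟨∑ k ∈ Finset.range (n + 1), C ((k.factorial : ℝ)⁻¹ * iteratedDeriv k g 0) * X ^ k,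
      Submodule.sum_mem _ fun k hk ↦ ?_, fun t ↦ ?_⟩
    · rw [mem_degreeLT]
      exact (degree_C_mul_X_pow_le _ _).trans_lt (by exact_mod_cast Finset.mem_range.1 hk)
    · rcases eq_or_ne 0 t with rfl | ht
      · simp [eval_finsetSum, Finset.sum_range_succ']
      have deriv_eq : ∀ k ∈ Finset.range (n + 1),
          iteratedDerivWithin k g (Set.uIcc 0 t) 0 = iteratedDeriv k g 0 := fun k hk ↦
        iteratedDerivWithin_eq_iteratedDeriv (uniqueDiffOn_uIcc ht)
          (hg.of_le (by exact_mod_cast (Finset.mem_range.1 hk).le)).contDiffAt Set.left_mem_uIcc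
      obtain ⟨s, -, remainder⟩ := taylor_mean_remainder_lagrange_iteratedDeriv ht
        (by exact_mod_cast hg.contDiffOn)
      rw [h, zero_mul, zero_div, sub_eq_zero, taylor_within_apply] at remainder
      rw [remainder, eval_finsetSum]
      refine Finset.sum_congr rfl fun k hk ↦ ?_
      rw [deriv_eq k hk]
      simp only [sub_zero, smul_eq_mul, eval_C_mul, eval_X_pow]
      ring

theorem isClosed_setOf_exists_degreeLT (n : ℕ) :
    IsClosed {g : ℝ → ℝ | ∃ p ∈ degreeLT ℝ n, ∀ t, g t = p.eval t} := by
  let S : Submodule ℝ (ℝ → ℝ) := (degreeLT ℝ n).map (LinearMap.pi leval)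
  have : FiniteDimensional ℝ (degreeLT ℝ n) := (degreeLTEquiv ℝ n).symm.finiteDimensional
  have coe_eq : {g : ℝ → ℝ | ∃ p ∈ degreeLT ℝ n, ∀ t, g t = p.eval t} = S := by
    ext g
    simp [S, funext_iff, eq_comm]
  rw [coe_eq]
  exact S.closed_of_finiteDimensional

theorem mem_closure_range_normed_convolution {g : ℝ → ℝ} (hg : Continuous g) :
    g ∈ closure (Set.range fun φ : ContDiffBump (0 : ℝ) ↦
      φ.normed volume ⋆[ContinuousLinearMap.lsmul ℝ ℝ] g) := by
  let φ (m : ℕ) : ContDiffBump (0 : ℝ) :=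
    { rIn := 1 / (m + 1) / 2
      rOut := 1 / (m + 1)
      rIn_pos := by positivity
      rIn_lt_rOut := half_lt_self (by positivity) }
  have tendsto_convolution : Tendsto
      (fun m ↦ (φ m).normed volume ⋆[ContinuousLinearMap.lsmul ℝ ℝ] g) atTop (𝓝 g) :=
    tendsto_pi_nhds.2 <| ContDiffBump.convolution_tendsto_right_of_continuous
      tendsto_one_div_add_atTop_nhds_zero_nat hg
  exact mem_closure_of_tendsto tendsto_convolution (Eventually.of_forall fun m ↦ ⟨φ m, rfl⟩)

theorem contDiff_normed_convolution {g : ℝ → ℝ} (hg : Continuous g) (φ : ContDiffBump (0 : ℝ)) :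
    ContDiff ℝ ∞ (φ.normed volume ⋆[ContinuousLinearMap.lsmul ℝ ℝ] g) :=
  φ.hasCompactSupport_normed.contDiff_convolution_left _ φ.contDiff_normed hg.locallyIntegrable

theorem exists_iteratedDeriv_normed_convolution_ne_zero {g : ℝ → ℝ} (hg : Continuous g)
    (hpoly : ¬ ∃ p : ℝ[X], ∀ t, g t = p.eval t) (n : ℕ) :
    ∃ (φ : ContDiffBump (0 : ℝ)) (b : ℝ),
      iteratedDeriv n (φ.normed volume ⋆[ContinuousLinearMap.lsmul ℝ ℝ] g) b ≠ 0 := by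
  by_contra! h
  have range_subset : (Set.range fun φ : ContDiffBump (0 : ℝ) ↦
      φ.normed volume ⋆[ContinuousLinearMap.lsmul ℝ ℝ] g) ⊆
        {g | ∃ p ∈ degreeLT ℝ n, ∀ t, g t = p.eval t} := by
    rintro _ ⟨φ, rfl⟩
    exact exists_degreeLT_of_iteratedDeriv_eq_zero
      ((contDiff_normed_convolution hg φ).of_le (by exact_mod_cast le_top)) (h φ)
  obtain ⟨p, -, hp⟩ := closure_minimal range_subset (isClosed_setOf_exists_degreeLT n)
    (mem_closure_range_normed_convolution hg)
  exact hpoly ⟨p, hp⟩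

end Polynomial

section Network

variable {X : Type*} [TopologicalSpace X]

/-- The space of shallow networks with activation `σ`, i.e. linear combinations of the functions
`σ ∘ u`, where the preactivations `u` range over `U`. -/
def shallowNetworks (σ : C(ℝ, ℝ)) (U : Submodule ℝ C(X, ℝ)) : Submodule ℝ C(X, ℝ) :=
  Submodule.span ℝ (σ.comp '' U)

theorem exists_eq_sum_of_mem_shallowNetworks {ι : Type*} [Fintype ι] {F : ι → C(X, ℝ)}
    {σ : C(ℝ, ℝ)} {a : C(X, ℝ)}
    (ha : a ∈ shallowNetworks σ (Submodule.span ℝ (insert 1 (Set.range F)))) :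
    ∃ (N : ℕ) (c h : Fin N → ℝ) (w : Fin N → ι → ℝ),
      ∀ x, a x = ∑ i, c i * σ ((∑ j, w i j * F j x) + h i) := by
  obtain ⟨N, c, y, rfl⟩ := Submodule.mem_span_set'.1 ha
  have neuron (i : Fin N) : ∃ (h : ℝ) (w : ι → ℝ),
      ∀ x, (y i : C(X, ℝ)) x = σ ((∑ j, w j * F j x) + h) := by
    obtain ⟨u, hu, hy⟩ := (y i).2
    obtain ⟨h, z, hz, rfl⟩ := Submodule.mem_span_insert.1 hu
    obtain ⟨w, rfl⟩ := (Submodule.mem_span_range_iff_exists_fun ℝ).1 hz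
    exact ⟨h, w, fun x ↦ by simp [← hy, add_comm]⟩
  choose h w hy using neuron
  exact ⟨N, c, h, w, fun x ↦ by simp [hy]⟩

variable [CompactSpace X] {M U : Submodule ℝ C(X, ℝ)}

theorem mul_comp_deriv_mem (hM : IsClosed (M : Set C(X, ℝ))) {g g' : C(ℝ, ℝ)}
    (hg : ∀ t, HasDerivAt g (g' t) t) {p : C(X, ℝ)} (hp : ∀ u ∈ U, p * g.comp u ∈ M)
    {u v : C(X, ℝ)} (hu : u ∈ U) (hv : v ∈ U) : v * p * g'.comp u ∈ M := by
  have hasDerivAt_line : HasDerivAt (fun s : ℝ ↦ p * g.comp (u + s • v)) (v * p * g'.comp u) 0 := by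
    simpa [mul_left_comm, mul_assoc] using (hasDerivAt_comp_add_smul hg u v 0).const_mul p
  exact hasDerivAt_mem_of_isClosed hM
    (fun s ↦ hp _ (U.add_mem hu (U.smul_mem s hv))) hasDerivAt_line

theorem mul_comp_iteratedDeriv_mem (hM : IsClosed (M : Set C(X, ℝ))) {g : C(ℝ, ℝ)}
    (hg : ContDiff ℝ ∞ g) (hgM : ∀ u ∈ U, g.comp u ∈ M) (n : ℕ) {p : C(X, ℝ)} (hp : p ∈ U ^ n)
    {u : C(X, ℝ)} (hu : u ∈ U) :
    p * (⟨iteratedDeriv n g, hg.continuous_iteratedDeriv n (by exact_mod_cast le_top)⟩ :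
      C(ℝ, ℝ)).comp u ∈ M := by
  induction hp using Submodule.pow_induction_on_left' generalizing u with
  | algebraMap r =>
    rw [← Algebra.smul_def]
    refine M.smul_mem r ?_
    convert hgM u hu using 2
    exact ContinuousMap.ext fun t ↦ congrFun iteratedDeriv_zero t
  | add p q n _ _ ihp ihq =>
    rw [add_mul]
    exact M.add_mem (ihp hu) (ihq hu)
  | mem_mul v hv n p _ ih =>
    refine mul_comp_deriv_mem hM (fun t ↦ ?_) (fun u hu ↦ ih hu) hu hv
    simp only [ContinuousMap.coe_mk, iteratedDeriv_succ]
    exact (hg.differentiable_iteratedDeriv n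
      (by exact_mod_cast WithTop.coe_lt_top n)).differentiableAt.hasDerivAt

theorem comp_convolution_mem (hM : IsClosed (M : Set C(X, ℝ))) (h1 : 1 ∈ U) {φ : ℝ → ℝ}
    (hφ : Continuous φ) (hφs : HasCompactSupport φ) {σ g : C(ℝ, ℝ)}
    (hg : ⇑g = φ ⋆[ContinuousLinearMap.lsmul ℝ ℝ] σ) (hσ : ∀ u ∈ U, σ.comp u ∈ M)
    {u : C(X, ℝ)} (hu : u ∈ U) : g.comp u ∈ M := by
  let A (t : ℝ) : C(X, ℝ) := φ t • σ.comp (u - t • 1)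
  have continuous_A : Continuous A :=
    hφ.smul ((ContinuousMap.continuous_postcomp σ).comp (by fun_prop))
  have integrable_A : Integrable A :=
    continuous_A.integrable_of_hasCompactSupport hφs.smul_right
  have comp_eq_integral : g.comp u = ∫ t, A t := by
    ext x
    simp [ContinuousMap.integral_apply integrable_A, A, hg, convolution]
  rw [comp_eq_integral]
  exact integral_mem_of_isClosed hM fun t ↦
    M.smul_mem _ (hσ _ (U.sub_mem hu (U.smul_mem t h1)))

theorem pow_le_topologicalClosure_shallowNetworks {σ : C(ℝ, ℝ)}
    (hσ : ¬ ∃ p : ℝ[X], ∀ t, σ t = p.eval t) (h1 : 1 ∈ U) (n : ℕ) :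
    U ^ n ≤ (shallowNetworks σ U).topologicalClosure := by
  intro p hp
  let M := (shallowNetworks σ U).topologicalClosure
  have hM : IsClosed (M : Set C(X, ℝ)) := Submodule.isClosed_topologicalClosure _
  obtain ⟨φ, b, hb⟩ := exists_iteratedDeriv_normed_convolution_ne_zero σ.continuous hσ n
  have hg := contDiff_normed_convolution σ.continuous φ
  have mollified_mem : ∀ u ∈ U, (⟨_, hg.continuous⟩ : C(ℝ, ℝ)).comp u ∈ M := fun u ↦
    comp_convolution_mem hM h1 φ.continuous_normed φ.hasCompactSupport_normed rfl
      fun v hv ↦ Submodule.le_topologicalClosure _ (Submodule.subset_span ⟨v, hv, rfl⟩)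
  have smul_mem :
      iteratedDeriv n (φ.normed volume ⋆[ContinuousLinearMap.lsmul ℝ ℝ] σ) b • p ∈ M := by
    convert mul_comp_iteratedDeriv_mem hM hg mollified_mem n hp (U.smul_mem b h1)
    ext x
    simp [mul_comm]
  exact (M.smul_mem_iff hb).1 smul_mem

theorem adjoin_le_topologicalClosure_shallowNetworks {σ : C(ℝ, ℝ)}
    (hσ : ¬ ∃ p : ℝ[X], ∀ t, σ t = p.eval t) (s : Set C(X, ℝ)) :
    Subalgebra.toSubmodule (Algebra.adjoin ℝ s) ≤
      (shallowNetworks σ (Submodule.span ℝ (insert 1 s))).topologicalClosure := by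
  rw [Algebra.adjoin_eq_span, Submodule.span_le]
  intro p hp
  have exists_mem_pow : ∃ n, p ∈ Submodule.span ℝ (insert 1 s) ^ n := by
    induction hp using Submonoid.closure_induction with
    | mem p hp =>
      exact ⟨1, (pow_one (Submodule.span ℝ (insert 1 s))).symm ▸
        Submodule.subset_span (Set.mem_insert_of_mem _ hp)⟩
    | one => exact ⟨0, by simpa only [pow_zero] using Submodule.one_le.1 le_rfl⟩
    | mul p q _ _ ihp ihq =>
      obtain ⟨m, hm⟩ := ihp
      obtain ⟨n, hn⟩ := ihq
      exact ⟨m + n, pow_add (Submodule.span ℝ (insert 1 s)) m n ▸ Submodule.mul_mem_mul hm hn⟩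
  obtain ⟨n, hn⟩ := exists_mem_pow
  exact pow_le_topologicalClosure_shallowNetworks hσ
    (Submodule.subset_span (Set.mem_insert _ _)) n hn

theorem exists_network_near_of_mem_topologicalClosure_adjoin {ι : Type*} [Fintype ι]
    {F : ι → C(X, ℝ)} {σ : C(ℝ, ℝ)} (hσ : ¬ ∃ p : ℝ[X], ∀ t, σ t = p.eval t) {f : C(X, ℝ)}
    (hf : f ∈ (Algebra.adjoin ℝ (Set.range F)).topologicalClosure) {ε : ℝ} (hε : 0 < ε) :
    ∃ (N : ℕ) (c h : Fin N → ℝ) (w : Fin N → ι → ℝ),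
      ∀ x, |f x - ∑ i, c i * σ ((∑ j, w i j * F j x) + h i)| < ε := by
  have mem_closure := closure_minimal (adjoin_le_topologicalClosure_shallowNetworks hσ _)
    (Submodule.isClosed_topologicalClosure _) hf
  obtain ⟨a, ha, hfa⟩ := Metric.mem_closure_iff.1 mem_closure ε hε
  obtain ⟨N, c, h, w, network_eq⟩ := exists_eq_sum_of_mem_shallowNetworks ha
  refine ⟨N, c, h, w, fun x ↦ ?_⟩
  rw [← network_eq, ← Real.dist_eq]
  exact (ContinuousMap.dist_apply_le_dist x).trans_lt hfa

end Network

section Invariant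

variable {κ : Type*}

theorem exists_mvPolynomial_near_of_continuousOn {K : Set (κ → ℝ)} (hK : IsCompact K)
    {f : (κ → ℝ) → ℝ} (hf : ContinuousOn f K) {ε : ℝ} (hε : 0 < ε) :
    ∃ p : MvPolynomial κ ℝ, ∀ x ∈ K, |f x - MvPolynomial.eval x p| < ε := by
  have : CompactSpace K := isCompact_iff_compactSpace.1 hK
  let coord (i : κ) : C(K, ℝ) := ⟨fun x ↦ x.1 i, (continuous_apply i).comp continuous_subtype_val⟩
  have separatesPoints : (MvPolynomial.aeval (R := ℝ) coord).range.SeparatesPoints := by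
    intro x y hxy
    obtain ⟨i, hi⟩ := Function.ne_iff.1 (Subtype.coe_ne_coe.2 hxy)
    exact ⟨coord i, ⟨coord i, ⟨MvPolynomial.X i, MvPolynomial.aeval_X _ i⟩, rfl⟩, hi⟩
  obtain ⟨⟨_, p, rfl⟩, hp⟩ :=
    ContinuousMap.exists_mem_subalgebra_near_continuous_of_separatesPoints _ separatesPoints
      (K.domRestrict f) hf.domRestrict ε hε
  refine ⟨p, fun x hx ↦ ?_⟩
  rw [abs_sub_comm, ← Real.norm_eq_abs]
  simpa [mvPolynomial_aeval_apply, coord] using hp ⟨x, hx⟩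

theorem exists_mvPolynomial_eval_eq_average {G : Type*} [Fintype G] [SMul G (κ → ℝ)]
    (hG : ∀ (g : G) (i : κ), ∃ q : MvPolynomial κ ℝ, ∀ x, (g • x) i = MvPolynomial.eval x q)
    (p : MvPolynomial κ ℝ) :
    ∃ q : MvPolynomial κ ℝ, ∀ x, MvPolynomial.eval x q =
      ∑ g : G, (Fintype.card G : ℝ)⁻¹ * MvPolynomial.eval (g • x) p := by
  choose Q hQ using hG
  refine ⟨∑ g : G, MvPolynomial.C (Fintype.card G : ℝ)⁻¹ * MvPolynomial.bind₁ (Q g) p,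
    fun x ↦ ?_⟩
  have eval_bind (g : G) :
      MvPolynomial.eval x (MvPolynomial.bind₁ (Q g) p) = MvPolynomial.eval (g • x) p := by
    rw [show g • x = fun i ↦ MvPolynomial.eval x (Q g i) from funext fun i ↦ hQ g i x]
    exact MvPolynomial.eval₂Hom_bind₁ _ _ _ _
  simp only [map_sum, map_mul, MvPolynomial.eval_C, eval_bind]

theorem exists_invariant_mvPolynomial_near_of_continuousOn {G : Type*} [Group G] [Finite G]
    [MulAction G (κ → ℝ)]
    (hG : ∀ (g : G) (i : κ), ∃ q : MvPolynomial κ ℝ, ∀ x, (g • x) i = MvPolynomial.eval x q)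
    {K : Set (κ → ℝ)} (hK : IsCompact K) (hGK : ∀ (g : G), ∀ x ∈ K, g • x ∈ K)
    {f : (κ → ℝ) → ℝ} (hf : ContinuousOn f K) (hGf : ∀ (g : G), ∀ x ∈ K, f (g • x) = f x)
    {ε : ℝ} (hε : 0 < ε) :
    ∃ p : MvPolynomial κ ℝ,
      (∀ (g : G) (x : κ → ℝ), MvPolynomial.eval (g • x) p = MvPolynomial.eval x p) ∧
      ∀ x ∈ K, |f x - MvPolynomial.eval x p| < ε := by
  have := Fintype.ofFinite G
  obtain ⟨p, hp⟩ := exists_mvPolynomial_near_of_continuousOn hK hf hε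
  obtain ⟨q, hq⟩ := exists_mvPolynomial_eval_eq_average hG p
  refine ⟨q, fun g x ↦ ?_, fun x hx ↦ ?_⟩
  · rw [hq, hq, ← Equiv.sum_comp (Equiv.mulRight g)
      fun g' ↦ (Fintype.card G : ℝ)⁻¹ * MvPolynomial.eval (g' • x) p]
    simp only [Equiv.coe_mulRight, mul_smul]
  · have translate_mem (g : G) : MvPolynomial.eval (g • x) p ∈ Metric.ball (f x) ε := by
      rw [Metric.mem_ball', Real.dist_eq, ← hGf g x hx]
      exact hp _ (hGK g x hx)
    have average_mem := (convex_ball (f x) ε).sum_mem (t := Finset.univ)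
      (w := fun _ : G ↦ (Fintype.card G : ℝ)⁻¹) (fun _ _ ↦ by positivity) (by simp)
      (fun g _ ↦ translate_mem g)
    simpa only [hq, smul_eq_mul, Metric.mem_ball', Real.dist_eq] using average_mem

theorem exists_mvPolynomial_eval_eq_linearMap_apply [Finite κ] (T : (κ → ℝ) →ₗ[ℝ] ℝ) :
    ∃ q : MvPolynomial κ ℝ, ∀ x, T x = MvPolynomial.eval x q := by
  classical
  have := Fintype.ofFinite κ
  refine ⟨∑ j, MvPolynomial.C (T fun i ↦ if j = i then 1 else 0) * MvPolynomial.X j, fun x ↦ ?_⟩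
  simp [LinearMap.pi_apply_eq_sum_univ T x, mul_comm]

end Invariant

end ShallowNetwork

open ShallowNetwork in
theorem yarotsky_invariant_universal_approximation_general
    {σ : ℝ → ℝ} (hσc : Continuous σ) (hσp : ¬ ∃ p : ℝ[X], ∀ t, σ t = p.eval t)
    {κ ι G : Type*} [Fintype ι] [Group G] [Finite G] [MulAction G (κ → ℝ)]
    (hG : ∀ (g : G) (i : κ), ∃ q : MvPolynomial κ ℝ, ∀ x, (g • x) i = MvPolynomial.eval x q)
    (P : ι → MvPolynomial κ ℝ)
    (hgen : ∀ p : MvPolynomial κ ℝ,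
      (∀ (g : G) (x : κ → ℝ), MvPolynomial.eval (g • x) p = MvPolynomial.eval x p) →
      ∃ q : MvPolynomial ι ℝ, ∀ x : κ → ℝ,
        MvPolynomial.eval x p = MvPolynomial.eval (fun j ↦ MvPolynomial.eval x (P j)) q)
    {K : Set (κ → ℝ)} (hK : IsCompact K) (hGK : ∀ (g : G), ∀ x ∈ K, g • x ∈ K)
    {f : (κ → ℝ) → ℝ} (hf : ContinuousOn f K) (hGf : ∀ (g : G), ∀ x ∈ K, f (g • x) = f x)
    {ε : ℝ} (hε : 0 < ε) :
    ∃ (N : ℕ) (c h : Fin N → ℝ) (w : Fin N → ι → ℝ),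
      ∀ x ∈ K, |f x - ∑ i, c i * σ ((∑ j, w i j * MvPolynomial.eval x (P j)) + h i)| < ε := by
  have : CompactSpace K := isCompact_iff_compactSpace.1 hK
  let F (j : ι) : C(K, ℝ) :=
    ⟨fun x ↦ MvPolynomial.eval x.1 (P j), (P j).continuous_eval.comp continuous_subtype_val⟩
  have mem_closure_adjoin : (⟨K.domRestrict f, hf.domRestrict⟩ : C(K, ℝ)) ∈
      (Algebra.adjoin ℝ (Set.range F)).topologicalClosure := by
    refine Metric.mem_closure_iff.2 fun δ hδ ↦ ?_
    obtain ⟨p, hGp, hp⟩ :=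
      exists_invariant_mvPolynomial_near_of_continuousOn hG hK hGK hf hGf hδ
    obtain ⟨q, hq⟩ := hgen p hGp
    refine ⟨MvPolynomial.aeval F q, ?_, (ContinuousMap.dist_lt_iff hδ).2 fun x ↦ ?_⟩
    · rw [Algebra.adjoin_range_eq_range_aeval]
      exact ⟨q, rfl⟩
    · rw [mvPolynomial_aeval_apply, Real.dist_eq]
      exact hq x ▸ hp x x.2
  obtain ⟨N, c, h, w, network_near⟩ :=
    exists_network_near_of_mem_topologicalClosure_adjoin (σ := ⟨σ, hσc⟩) hσp mem_closure_adjoin hε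
  exact ⟨N, c, h, w, fun x hx ↦ network_near ⟨x, hx⟩⟩

/-- Theorem 2 (Yarotsky): given a finite group `G` acting linearly on `W = ℝ^d`,
a finite generating set `f_j = eval (P j)` of the algebra of `G`-invariant
polynomial functions, and a continuous non-polynomial activation `σ`, every
continuous `G`-invariant function on a compact `G`-stable set `K` can be
uniformly approximated by `x ↦ ∑_i c_i σ(∑_j w_{ij} f_j(x) + h_i)`. -/
theorem yarotsky_invariant_universal_approximation
    (σ : ℝ → ℝ) (hσc : Continuous σ)
    (hσp : ¬ ∃ p : Polynomial ℝ, ∀ t : ℝ, σ t = Polynomial.eval t p)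
    (d : ℕ) (G : Type) [Group G] [Fintype G]
    (ρ : G →* ((Fin d → ℝ) →ₗ[ℝ] (Fin d → ℝ)))
    (Ninv : ℕ) (P : Fin Ninv → MvPolynomial (Fin d) ℝ)
    (hPinv : ∀ (j : Fin Ninv) (g : G) (x : Fin d → ℝ),
      MvPolynomial.eval (ρ g x) (P j) = MvPolynomial.eval x (P j))
    (hgen : ∀ p : MvPolynomial (Fin d) ℝ,
      (∀ (g : G) (x : Fin d → ℝ), MvPolynomial.eval (ρ g x) p = MvPolynomial.eval x p) →
      ∃ q : MvPolynomial (Fin Ninv) ℝ, ∀ x : Fin d → ℝ,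
        MvPolynomial.eval x p = MvPolynomial.eval (fun j => MvPolynomial.eval x (P j)) q)
    (K : Set (Fin d → ℝ)) (hK : IsCompact K)
    (hKstable : ∀ (g : G), ∀ x ∈ K, ρ g x ∈ K)
    (f : (Fin d → ℝ) → ℝ) (hf : ContinuousOn f K)
    (hfinv : ∀ (g : G), ∀ x ∈ K, f (ρ g x) = f x)
    (ε : ℝ) (hε : 0 < ε) :
    ∃ (N : ℕ) (c h : Fin N → ℝ) (w : Fin N → Fin Ninv → ℝ),
      ∀ x ∈ K,
        |f x - ∑ i : Fin N,
            c i * σ ((∑ j : Fin Ninv, w i j * MvPolynomial.eval x (P j)) + h i)| < ε := by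
  let := MulAction.compHom (Fin d → ℝ) ρ
  exact yarotsky_invariant_universal_approximation_general hσc hσp
    (fun g i ↦ ShallowNetwork.exists_mvPolynomial_eval_eq_linearMap_apply
      (LinearMap.proj i ∘ₗ ρ g)) P hgen hK hKstable hf hfinv hε
end

section
/- (Proposition 1, universality of the proposed G-invariant network, scalar-feature case.) Let σ : ℝ → ℝ be a continuous activation function that is not a polynomial, let n ≥ 1, let G be a finite subgroup of the symmetric group S_n, and let V ⊂ ℝ^n be a compact G-stable set contained in [0,1]^n. Let f : V → ℝ be continuous and G-invariant. Then for every ε > 0 there exist n_mid ∈ ℕ, one-hidden-layer networks φ_1,…,φ_n : ℝ → ℝ^{n_mid} with activation σ, and a one-hidden-layer network f_out : ℝ^{n_mid} → ℝ with activation σ, such that sup_{x ∈ V} | f(x) − f_out( ∑_{g ∈ G} ∏_{j=1}^{n} φ_j(x_{g(j)}) ) | < ε, where the product over j is taken componentwise in ℝ^{n_mid}. -/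
/-!
Let `M` be a closed subspace of `C(K, ℝ)`. If `q · g(w p + b) ∈ M` for all `w` and `b`, then
integrating over `[b, b + δ]` and differentiating in `w` gives `q · p · (Δ_δ g)(w p + b) ∈ M`. If
`g` is continuous and not a polynomial, then `Δ_δ g` is not a polynomial for at least one of
`δ = 1, √2`, since a continuous function whose increments for both steps are polynomials is a
polynomial plus a continuous function with the periods `1` and `√2`, which is constant. So, starting
from `g = σ`, the step can be iterated without reaching the zero function, and at `w = 0` it yields
every power `p ^ k` in the closed span of the functions `σ(w p + b)`.

Taking products over the coordinates, Stone-Weierstrass makes the sums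
`∑ₖ cₖ ∏ⱼ σ(wₖⱼ xⱼ + bₖⱼ)` dense in `C(V, ℝ)`. Averaging such a sum over the group does not move it
away from an invariant `f`, and turns it into a linear form `z` in the sum-product latent vector.
The case `k = 1`, `p = z` approximates `z` by a network in `z`, which is the output network.
-/

open Function Polynomial
open scoped BigOperators fwdDiff Pointwise

/-! ### Polynomials and finite differences -/

theorem exists_comp_one_add_X_sub_eq {R : Type*} [CommRing R] [Algebra ℚ R] (q : R[X]) :
    ∃ p : R[X], p.comp (1 + X) - p = q := by
  induction q using Polynomial.induction_on' with
  | add q₁ q₂ h₁ h₂ =>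
    obtain ⟨p₁, rfl⟩ := h₁
    obtain ⟨p₂, rfl⟩ := h₂
    exact ⟨p₁ + p₂, by rw [add_comp]; ring⟩
  | monomial n a =>
    let B : R[X] := (Polynomial.bernoulli (n + 1)).map (algebraMap ℚ R)
    have hB : B.comp (1 + X) = B + ((n + 1 : ℕ) : R[X]) * X ^ n := by
      simpa [Polynomial.map_comp] using
        congrArg (Polynomial.map (algebraMap ℚ R)) (bernoulli_comp_one_add_X (n + 1))
    have hinv : algebraMap ℚ R ((n + 1 : ℕ) : ℚ)⁻¹ * ((n + 1 : ℕ) : R) = 1 := by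
      rw [← map_natCast (algebraMap ℚ R), ← map_mul,
        inv_mul_cancel₀ (Nat.cast_ne_zero.2 n.succ_ne_zero), map_one]
    refine ⟨C (a * algebraMap ℚ R ((n + 1 : ℕ) : ℚ)⁻¹) * B, ?_⟩
    rw [mul_comp, C_comp, hB, mul_add, add_sub_cancel_left, ← mul_assoc, ← C_eq_natCast, ← C_mul,
      mul_assoc, hinv, mul_one, C_mul_X_pow_eq_monomial]

theorem eq_C_eval_zero_of_periodic {R : Type*} [CommRing R] [IsDomain R] [CharZero R] {p : R[X]}
    (hp : Periodic (fun x => p.eval x) 1) : p = C (p.eval 0) := by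
  refine eq_of_infinite_eval_eq _ _ ((Set.infinite_range_of_injective Nat.cast_injective).mono ?_)
  rintro _ ⟨n, rfl⟩
  simpa using hp.nat_mul_eq n

theorem eq_zero_of_add_eq_add_const {r : ℝ → ℝ} (hr : Continuous r) {T : ℝ} (hT : T ≠ 0)
    (hper : Periodic r T) {θ c : ℝ} (h : ∀ x, r (x + θ) = r x + c) : c = 0 := by
  have hK : IsCompact (Set.range r) := hper.compact_of_continuous hT hr
  obtain ⟨_, ⟨a, rfl⟩, ha⟩ := hK.exists_isGreatest (Set.range_nonempty r)
  obtain ⟨_, ⟨b, rfl⟩, hb⟩ := hK.exists_isLeast (Set.range_nonempty r)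
  have hle : r (a + θ) ≤ r a := ha ⟨_, rfl⟩
  have hge : r b ≤ r (b + θ) := hb ⟨_, rfl⟩
  linarith [h a, h b]

theorem apply_eq_apply_zero_of_periodic {α : Type*} [TopologicalSpace α] [T2Space α] {r : ℝ → α}
    (hr : Continuous r) {a b : ℝ} (hab : Irrational (a / b)) (ha : Periodic r a)
    (hb : Periodic r b) (x : ℝ) : r x = r 0 := by
  have hper : ∀ t ∈ AddSubgroup.closure {a, b}, Periodic r t := fun t ht => by
    induction ht using AddSubgroup.closure_induction with
    | mem t ht => rcases ht with rfl | rfl <;> assumption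
    | zero => exact periodic_with_period_zero r
    | add s t _ _ hs ht => exact hs.add_period ht
    | neg t _ ht => exact ht.neg
  exact congrFun (hr.ext_on (dense_addSubgroupClosure_pair_iff.2 hab) continuous_const
    fun t ht => (hper t ht).eq) x

/-- `g` is given by evaluating a polynomial; universality needs an activation that is not of this
kind. -/
def IsPolynomialFunction {R : Type*} [Semiring R] (g : R → R) : Prop :=
  ∃ p : R[X], ∀ t, g t = p.eval t

theorem isPolynomialFunction_of_fwdDiff {g : ℝ → ℝ} (hg : Continuous g) {θ : ℝ}
    (hθ : Irrational θ) (h₁ : IsPolynomialFunction (Δ_[1] g))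
    (h₂ : IsPolynomialFunction (Δ_[θ] g)) : IsPolynomialFunction g := by
  obtain ⟨q, hq⟩ := h₁
  obtain ⟨q', hq'⟩ := h₂
  obtain ⟨p, rfl⟩ := exists_comp_one_add_X_sub_eq q
  let r : ℝ → ℝ := fun x => g x - p.eval x
  have hr : Continuous r := hg.sub p.continuous
  have hr₁ : Periodic r 1 := fun x => by
    have := hq x
    simp only [fwdDiff, eval_sub, eval_comp, eval_add, eval_one, eval_X, add_comm 1 x] at this
    simp only [r]
    linarith
  let s : ℝ[X] := q' - (p.comp (X + C θ) - p)
  have hs : ∀ x, r (x + θ) = r x + s.eval x := fun x => by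
    have := hq' x
    simp only [fwdDiff] at this
    simp only [r, s, eval_sub, eval_comp, eval_add, eval_C, eval_X]
    linarith
  have hs_per : Periodic (fun x => s.eval x) 1 := fun x => by
    linarith [hs x, hs (x + 1), hr₁ x, hr₁ (x + θ), congrArg r (add_right_comm x 1 θ)]
  have hs_const : ∀ x, s.eval x = s.eval 0 := fun x => by
    rw [eq_C_eval_zero_of_periodic hs_per, eval_C, eval_C]
  have hs_zero : s.eval 0 = 0 := eq_zero_of_add_eq_add_const hr one_ne_zero hr₁ fun x => by
    rw [hs, hs_const]
  have hrθ : Periodic r θ := fun x => by rw [hs, hs_const, hs_zero, add_zero]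
  refine ⟨p + C (r 0), fun t => ?_⟩
  have : r t = r 0 := apply_eq_apply_zero_of_periodic hr (by simpa using hθ) hrθ hr₁ t
  rw [eval_add, eval_C, ← this, add_sub_cancel]

/-! ### Curves in Banach spaces -/

theorem deriv_mem_of_forall_mem {𝕜 E : Type*} [NontriviallyNormedField 𝕜] [NormedAddCommGroup E]
    [NormedSpace 𝕜 E] {M : Submodule 𝕜 E} (hM : IsClosed (M : Set E)) {c : 𝕜 → E}
    (hc : ∀ t, c t ∈ M) (t : 𝕜) : deriv c t ∈ M := by
  have hspan : Submodule.span 𝕜 (c '' Set.univ) ≤ M :=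
    Submodule.span_le.2 (Set.image_subset_iff.2 fun s _ => hc s)
  exact closure_minimal hspan hM (range_deriv_subset_closure_span_image c dense_univ ⟨t, rfl⟩)

theorem sub_mem_of_forall_hasDerivAt_mem {𝕜 E : Type*} [RCLike 𝕜] [NormedAddCommGroup E]
    [NormedSpace 𝕜 E] {M : Submodule 𝕜 E} (hM : IsClosed (M : Set E)) {c c' : 𝕜 → E}
    (hc : ∀ t, HasDerivAt c (c' t) t) (hc' : ∀ t, c' t ∈ M) (a b : 𝕜) : c a - c b ∈ M := by
  have hquot : ∀ t, HasDerivAt (fun t => M.mkQL (c t)) 0 t := fun t => by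
    have := M.mkQL.hasFDerivAt.comp_hasDerivAt t (hc t)
    rwa [show M.mkQL (c' t) = 0 from (Submodule.Quotient.mk_eq_zero M).2 (hc' t)] at this
  rw [← Submodule.Quotient.eq]
  exact is_const_of_deriv_eq_zero (fun t => (hquot t).differentiableAt)
    (fun t => (hquot t).deriv) a b

theorem hasDerivAt_of_forall_hasDerivAt_apply {K : Type*} [TopologicalSpace K] [CompactSpace K]
    {E : Type*} [NormedAddCommGroup E] [NormedSpace ℝ E] [CompleteSpace E] {c c' : ℝ → C(K, E)}
    (hc' : Continuous c') (h : ∀ y t, HasDerivAt (fun s => c s y) (c' t y) t) (t : ℝ) :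
    HasDerivAt c (c' t) t := by
  have hint : ∀ s, c s = c 0 + ∫ τ in (0 : ℝ)..s, c' τ := fun s => by
    ext y
    rw [ContinuousMap.add_apply, ← sub_eq_iff_eq_add',
      ← intervalIntegral.integral_eq_sub_of_hasDerivAt (fun τ _ => h y τ)
        (((continuous_eval_const y).comp hc').intervalIntegrable 0 s)]
    exact (ContinuousMap.evalCLM ℝ y).intervalIntegral_comp_comm
      (hc'.intervalIntegrable (μ := MeasureTheory.volume) 0 s)
  rw [funext hint]
  exact (intervalIntegral.integral_hasDerivAt_right (hc'.intervalIntegrable 0 t)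
    hc'.stronglyMeasurable.stronglyMeasurableAtFilter hc'.continuousAt).const_add _

theorem exists_forall_hasDerivAt (g : C(ℝ, ℝ)) : ∃ G : C(ℝ, ℝ), ∀ x, HasDerivAt G (g x) x := by
  have hG : ∀ x, HasDerivAt (fun x => ∫ t in (0 : ℝ)..x, g t) (g x) x := fun x =>
    intervalIntegral.integral_hasDerivAt_right (g.continuous.intervalIntegrable 0 x)
      g.continuous.stronglyMeasurable.stronglyMeasurableAtFilter g.continuous.continuousAt
  exact ⟨⟨_, continuous_iff_continuousAt.2 fun x => (hG x).continuousAt⟩, hG⟩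

/-! ### Ridge functions -/

section Ridge

variable {K : Type*} [TopologicalSpace K]

/-- The ridge function `g(w p + b)`: one hidden neuron with activation `g`, weight `w` and bias `b`,
fed with the feature `p`. -/
def ridge (g : C(ℝ, ℝ)) (p : C(K, ℝ)) (w b : ℝ) : C(K, ℝ) :=
  g.comp (w • p + b • 1)

@[simp]
theorem ridge_apply (g : C(ℝ, ℝ)) (p : C(K, ℝ)) (w b : ℝ) (y : K) :
    ridge g p w b y = g (w * p y + b) := by
  simp [ridge]

theorem continuous_ridge {X : Type*} [TopologicalSpace X] (g : C(ℝ, ℝ)) (p : C(K, ℝ)) {w b : X → ℝ}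
    (hw : Continuous w) (hb : Continuous b) : Continuous fun x => ridge g p (w x) (b x) :=
  (ContinuousMap.continuous_postcomp g).comp (by fun_prop)

variable [CompactSpace K]

theorem hasDerivAt_ridge_bias {G g : C(ℝ, ℝ)} (hG : ∀ x, HasDerivAt G (g x) x) (p : C(K, ℝ))
    (w b : ℝ) : HasDerivAt (fun b => ridge G p w b) (ridge g p w b) b := by
  refine hasDerivAt_of_forall_hasDerivAt_apply
    (continuous_ridge g p continuous_const continuous_id) (fun y t => ?_) b
  simpa using (hG _).comp_const_add (w * p y) t

theorem hasDerivAt_ridge_weight {G g : C(ℝ, ℝ)} (hG : ∀ x, HasDerivAt G (g x) x) (p : C(K, ℝ))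
    (w b : ℝ) : HasDerivAt (fun w => ridge G p w b) (p * ridge g p w b) w := by
  refine hasDerivAt_of_forall_hasDerivAt_apply (c' := fun w => p * ridge g p w b)
    (continuous_const.mul (continuous_ridge g p continuous_id continuous_const)) (fun y t => ?_) w
  have hinner : HasDerivAt (fun w => w * p y + b) (p y) t := by
    simpa using ((hasDerivAt_id t).mul_const (p y)).add_const b
  simpa [mul_comm (p y), Function.comp_def] using (hG _).comp t hinner

section ClosedSubmodule

variable {M : Submodule ℝ C(K, ℝ)} (hM : IsClosed (M : Set C(K, ℝ))) {p : C(K, ℝ)}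
include hM

theorem mul_ridge_fwdDiff_mem {g d : C(ℝ, ℝ)} {δ : ℝ} (hd : ⇑d = Δ_[δ] g) {q : C(K, ℝ)}
    (hq : ∀ w b, q * ridge g p w b ∈ M) (w b : ℝ) : q * p * ridge d p w b ∈ M := by
  obtain ⟨G, hG⟩ := exists_forall_hasDerivAt g
  have hincr : ∀ w, q * ridge G p w (b + δ) - q * ridge G p w b ∈ M := fun w =>
    sub_mem_of_forall_hasDerivAt_mem hM
      (fun b => (hasDerivAt_ridge_bias hG p w b).const_mul q) (hq w) (b + δ) b
  have hderiv := ((hasDerivAt_ridge_weight hG p w (b + δ)).const_mul q).sub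
    ((hasDerivAt_ridge_weight hG p w b).const_mul q)
  have hval : q * p * ridge d p w b =
      q * (p * ridge g p w (b + δ)) - q * (p * ridge g p w b) := by
    ext y
    simp only [ContinuousMap.mul_apply, ContinuousMap.sub_apply, ridge_apply, hd, fwdDiff,
      add_assoc]
    ring
  rw [hval, ← hderiv.deriv]
  exact deriv_mem_of_forall_mem hM hincr w

theorem mul_pow_mem_of_forall_mul_ridge_mem {g : C(ℝ, ℝ)} (hg : ¬ IsPolynomialFunction g)
    {q : C(K, ℝ)} (hq : ∀ w b, q * ridge g p w b ∈ M) (k : ℕ) : q * p ^ k ∈ M := by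
  induction k generalizing g q with
  | zero =>
    obtain ⟨b, hb⟩ : ∃ b, g b ≠ 0 := by
      by_contra! h
      exact hg ⟨0, by simpa using h⟩
    have hconst : q * ridge g p 0 b = g b • q := by
      ext y
      simp [mul_comm]
    rw [pow_zero, mul_one]
    exact (M.smul_mem_iff hb).1 (hconst ▸ hq 0 b)
  | succ k ih =>
    obtain ⟨δ, hδ⟩ : ∃ δ, ¬ IsPolynomialFunction (Δ_[δ] g) := by
      by_contra! h
      exact hg (isPolynomialFunction_of_fwdDiff g.continuous irrational_sqrt_two (h 1) (h √2))
    let d : C(ℝ, ℝ) := ⟨Δ_[δ] g, by unfold fwdDiff; fun_prop⟩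
    rw [pow_succ', ← mul_assoc]
    exact ih (g := d) hδ (mul_ridge_fwdDiff_mem hM rfl hq)

end ClosedSubmodule

theorem pow_mem_topologicalClosure_span_ridge {σ : C(ℝ, ℝ)} (hσ : ¬ IsPolynomialFunction σ)
    (p : C(K, ℝ)) (k : ℕ) : p ^ k ∈ (Submodule.span ℝ
      (Set.range fun a : ℝ × ℝ => ridge σ p a.1 a.2)).topologicalClosure := by
  rw [← one_mul (p ^ k)]
  refine mul_pow_mem_of_forall_mul_ridge_mem (Submodule.isClosed_topologicalClosure _) hσ
    (fun w b => ?_) k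
  rw [one_mul]
  exact Submodule.le_topologicalClosure _ (Submodule.subset_span ⟨(w, b), rfl⟩)

end Ridge

/-! ### Universality -/

theorem prod_mem_topologicalClosure_span_prod {R A ι κ : Type*} [CommSemiring R] [CommSemiring A]
    [Algebra R A] [TopologicalSpace A] [IsTopologicalSemiring A] [ContinuousConstSMul R A]
    [Fintype ι] {x : ι → A} {v : ι → κ → A}
    (hx : ∀ i, x i ∈ (Submodule.span R (Set.range (v i))).topologicalClosure) :
    ∏ i, x i ∈
      (Submodule.span R (Set.range fun a : ι → κ => ∏ i, v i (a i))).topologicalClosure := by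
  let N (i : ι) : Submodule R A := Submodule.span R (Set.range (v i))
  have hspan : Submodule.span R (∏ i, (N i : Set A)) =
      Submodule.span R (Set.range fun a : ι → κ => ∏ i, v i (a i)) := by
    rw [← Submodule.prod_span]
    simp only [Submodule.span_eq, N]
    rw [Submodule.prod_span, ← Set.image_fintype_prod_pi, ← Set.range_piMap, ← Set.range_comp]
    rfl
  have hmem : x ∈ closure (Set.univ.pi fun i => (N i : Set A)) := by
    rw [closure_pi_set]
    exact fun i _ => hx i
  refine map_mem_closure (f := fun x : ι → A => ∏ i, x i) (by fun_prop) hmem fun y hy => ?_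
  rw [← hspan]
  exact Submodule.subset_span ((Set.mem_fintype_prod _ _).2 ⟨y, fun i => hy i trivial, rfl⟩)

theorem exists_fin_sum_of_mem_span_range {R M α : Type*} [Semiring R] [AddCommMonoid M] [Module R M]
    {v : α → M} {x : M} (hx : x ∈ Submodule.span R (Set.range v)) :
    ∃ (N : ℕ) (c : Fin N → R) (a : Fin N → α), x = ∑ i, c i • v (a i) := by
  obtain ⟨N, c, y, rfl⟩ := Submodule.mem_span_set'.1 hx
  choose a ha using fun i => (y i).2
  exact ⟨N, c, a, by simp only [ha]⟩

theorem abs_sub_expect_lt {H : Type*} [Fintype H] [Nonempty H] {a ε : ℝ} {u : H → ℝ}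
    (hu : ∀ h, |a - u h| < ε) : |a - (𝔼 h, u h)| < ε := by
  rw [← Finset.expect_const (Finset.univ_nonempty (α := H)) a, ← Finset.expect_sub_distrib]
  exact (Finset.abs_expect_le _ _).trans_lt (Finset.expect_lt (fun h _ => (hu h).le)
    ⟨Classical.arbitrary H, Finset.mem_univ _, hu _⟩)

section Approximation

variable {σ : C(ℝ, ℝ)} (hσ : ¬ IsPolynomialFunction σ) {ι : Type*} [Fintype ι]
include hσ

theorem dense_span_prod_ridge {K : Type*} [TopologicalSpace K] [CompactSpace K] {p : ι → C(K, ℝ)}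
    (hp : Injective fun y i => p i y) :
    Dense (Submodule.span ℝ (Set.range fun a : ι → ℝ × ℝ =>
      ∏ i, ridge σ (p i) (a i).1 (a i).2) : Set C(K, ℝ)) := by
  rw [Submodule.dense_iff_topologicalClosure_eq_top]
  set W := Submodule.span ℝ (Set.range fun a : ι → ℝ × ℝ => ∏ i, ridge σ (p i) (a i).1 (a i).2)
  have hmonomial : ∀ d : ι →₀ ℕ, ∏ i, p i ^ d i ∈ W.topologicalClosure := fun d =>
    prod_mem_topologicalClosure_span_prod (v := fun i (a : ℝ × ℝ) => ridge σ (p i) a.1 a.2)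
      fun i => pow_mem_topologicalClosure_span_ridge hσ (p i) (d i)
  let A : Subalgebra ℝ C(K, ℝ) := (MvPolynomial.aeval p).range
  have hAW : (A : Set C(K, ℝ)) ⊆ W.topologicalClosure := by
    rintro _ ⟨P, rfl⟩
    change MvPolynomial.aeval p P ∈ W.topologicalClosure
    rw [MvPolynomial.aeval_def, MvPolynomial.eval₂_eq']
    refine sum_mem fun d _ => ?_
    rw [← Algebra.smul_def]
    exact W.topologicalClosure.smul_mem _ (hmonomial d)
  have hA : A.SeparatesPoints := fun y z hyz => by
    obtain ⟨i, hi⟩ := Function.ne_iff.1 (hp.ne hyz)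
    exact ⟨p i, ⟨p i, ⟨MvPolynomial.X i, by simp⟩, rfl⟩, hi⟩
  refine eq_top_iff.2 fun u _ => ?_
  exact closure_minimal hAW W.isClosed_topologicalClosure
    (ContinuousMap.continuousMap_mem_subalgebra_closure_of_separatesPoints A hA u)

theorem exists_sum_ridge_near {X : Type*} [TopologicalSpace X] {V : Set X} (hV : IsCompact V)
    {z : X → ℝ} (hz : ContinuousOn z V) {ε : ℝ} (hε : 0 < ε) :
    ∃ (N : ℕ) (c w b : Fin N → ℝ), ∀ x ∈ V, |z x - ∑ i, c i * σ (w i * z x + b i)| < ε := by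
  have : CompactSpace V := isCompact_iff_compactSpace.1 hV
  let zV : C(V, ℝ) := ⟨V.domRestrict z, hz.domRestrict⟩
  obtain ⟨u, hu, hzu⟩ := Metric.mem_closure_iff.1
    (pow_one zV ▸ pow_mem_topologicalClosure_span_ridge hσ zV 1) ε hε
  obtain ⟨N, c, a, rfl⟩ := exists_fin_sum_of_mem_span_range hu
  refine ⟨N, c, fun i => (a i).1, fun i => (a i).2, fun x hx => ?_⟩
  simpa [Real.dist_eq, ContinuousMap.sum_apply, zV, Set.domRestrict_apply] using
    (ContinuousMap.dist_apply_le_dist (⟨x, hx⟩ : V)).trans_lt hzu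

theorem exists_sum_prod_near {V : Set (ι → ℝ)} (hV : IsCompact V) {f : (ι → ℝ) → ℝ}
    (hf : ContinuousOn f V) {ε : ℝ} (hε : 0 < ε) :
    ∃ (N : ℕ) (c : Fin N → ℝ) (w b : Fin N → ι → ℝ),
      ∀ x ∈ V, |f x - ∑ k, c k * ∏ j, σ (w k j * x j + b k j)| < ε := by
  have : CompactSpace V := isCompact_iff_compactSpace.1 hV
  let coord (j : ι) : C(V, ℝ) := ⟨fun x => x.1 j, (continuous_apply j).comp continuous_subtype_val⟩
  have hcoord : Injective fun (x : V) j => coord j x := Subtype.val_injective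
  obtain ⟨u, hu, hfu⟩ := (dense_span_prod_ridge hσ hcoord).exists_dist_lt
    ⟨V.domRestrict f, hf.domRestrict⟩ hε
  obtain ⟨N, c, a, rfl⟩ := exists_fin_sum_of_mem_span_range hu
  refine ⟨N, c, fun k j => (a k j).1, fun k j => (a k j).2, fun x hx => ?_⟩
  simpa [Real.dist_eq, ContinuousMap.sum_apply, ContinuousMap.prod_apply, coord,
    Set.domRestrict_apply] using (ContinuousMap.dist_apply_le_dist (⟨x, hx⟩ : V)).trans_lt hfu

theorem exists_sum_sum_prod_near_of_invariant {H : Type*} [Fintype H] [Nonempty H] {ρ : H → ι → ι}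
    {V : Set (ι → ℝ)} (hV : IsCompact V) (hstable : ∀ h, ∀ x ∈ V, (fun i => x (ρ h i)) ∈ V)
    {f : (ι → ℝ) → ℝ} (hf : ContinuousOn f V) (hinv : ∀ h, ∀ x ∈ V, f (fun i => x (ρ h i)) = f x)
    {ε : ℝ} (hε : 0 < ε) :
    ∃ (N : ℕ) (c : Fin N → ℝ) (w b : Fin N → ι → ℝ),
      ∀ x ∈ V, |f x - ∑ k, c k * ∑ h, ∏ j, σ (w k j * x (ρ h j) + b k j)| < ε := by
  obtain ⟨N, c, w, b, hc⟩ := exists_sum_prod_near hσ hV hf hε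
  refine ⟨N, fun k => c k / Fintype.card H, w, b, fun x hx => ?_⟩
  have havg : 𝔼 h, ∑ k, c k * ∏ j, σ (w k j * x (ρ h j) + b k j) =
      ∑ k, c k / Fintype.card H * ∑ h, ∏ j, σ (w k j * x (ρ h j) + b k j) := by
    rw [Fintype.expect_eq_sum_div_card, Finset.sum_comm, Finset.sum_div]
    simp only [← Finset.mul_sum, mul_div_right_comm]
  rw [← havg]
  exact abs_sub_expect_lt fun h => hinv h x hx ▸ hc _ (hstable h x hx)

end Approximation

theorem G_invariant_network_universal_general {σ : ℝ → ℝ} (hσc : Continuous σ)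
    (hσp : ¬ IsPolynomialFunction σ) {ι H : Type*} [Fintype ι] [Fintype H] [Nonempty H]
    {ρ : H → ι → ι} {V : Set (ι → ℝ)} (hV : IsCompact V)
    (hstable : ∀ h, ∀ x ∈ V, (fun i => x (ρ h i)) ∈ V) {f : (ι → ℝ) → ℝ} (hf : ContinuousOn f V)
    (hinv : ∀ h, ∀ x ∈ V, f (fun i => x (ρ h i)) = f x) {ε : ℝ} (hε : 0 < ε) :
    ∃ (nmid : ℕ) (φ : ι → ℝ → (Fin nmid → ℝ)) (fout : (Fin nmid → ℝ) → ℝ),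
      (∀ j : ι, ∃ (N : ℕ) (c : Fin N → Fin nmid → ℝ) (w h : Fin N → ℝ),
        ∀ (t : ℝ) (k : Fin nmid), φ j t k = ∑ i : Fin N, c i k * σ (w i * t + h i)) ∧
      (∃ (N : ℕ) (c : Fin N → ℝ) (w : Fin N → Fin nmid → ℝ) (h : Fin N → ℝ),
        ∀ y : Fin nmid → ℝ,
          fout y = ∑ i : Fin N, c i * σ ((∑ j : Fin nmid, w i j * y j) + h i)) ∧
      (∀ x ∈ V, |f x - fout (∑ h, ∏ j, φ j (x (ρ h j)))| < ε) := by
  lift σ to C(ℝ, ℝ) using hσc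
  obtain ⟨nmid, c, w, b, hfz⟩ :=
    exists_sum_sum_prod_near_of_invariant hσp hV hstable hf hinv (half_pos hε)
  let z (x : ι → ℝ) : ℝ := ∑ k, c k * ∑ h, ∏ j, σ (w k j * x (ρ h j) + b k j)
  have hz : Continuous z := by fun_prop
  obtain ⟨N, a, u, s, hzs⟩ := exists_sum_ridge_near hσp hV hz.continuousOn (half_pos hε)
  let φ (j : ι) (t : ℝ) (k : Fin nmid) : ℝ := σ (w k j * t + b k j)
  let fout (y : Fin nmid → ℝ) : ℝ := ∑ i, a i * σ ((∑ k, u i * c k * y k) + s i)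
  have hfout : ∀ x, fout (∑ h, ∏ j, φ j (x (ρ h j))) = ∑ i, a i * σ (u i * z x + s i) := fun x => by
    simp only [fout, φ, z, Finset.sum_apply, Finset.prod_apply, mul_assoc, Finset.mul_sum]
  refine ⟨nmid, φ, fout, fun j => ⟨nmid, fun i k => if i = k then 1 else 0, fun i => w i j,
    fun i => b i j, fun t k => by simp [φ]⟩, ⟨N, a, fun i k => u i * c k, s, fun y => rfl⟩,
    fun x hx => ?_⟩
  rw [hfout, ← add_halves ε]
  exact (abs_sub_le _ (z x) _).trans_lt (add_lt_add (hfz x hx) (hzs x hx))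

/-- Proposition 1 (universality of the proposed `G`-invariant network, scalar-feature
case): every continuous `G`-invariant function on a compact `G`-stable `V ⊆ [0,1]^n`
can be uniformly approximated by `f_out (∑_{g ∈ G} ∏_j φ_j(x_{g(j)}))`, where the
`φ_j : ℝ → ℝ^{n_mid}` and `f_out : ℝ^{n_mid} → ℝ` are one-hidden-layer networks
with activation `σ` and the product over `j` is componentwise. -/
theorem G_invariant_network_universal
    (σ : ℝ → ℝ) (hσc : Continuous σ)
    (hσp : ¬ ∃ p : Polynomial ℝ, ∀ t : ℝ, σ t = Polynomial.eval t p)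
    (n : ℕ) (hn : 1 ≤ n)
    (G : Subgroup (Equiv.Perm (Fin n))) [Fintype G]
    (V : Set (Fin n → ℝ)) (hVc : IsCompact V)
    (hVsub : V ⊆ Set.Icc (0 : Fin n → ℝ) 1)
    (hVstable : ∀ g ∈ G, ∀ x ∈ V, (fun i => x (g i)) ∈ V)
    (f : (Fin n → ℝ) → ℝ) (hf : ContinuousOn f V)
    (hfinv : ∀ g ∈ G, ∀ x ∈ V, f (fun i => x (g i)) = f x)
    (ε : ℝ) (hε : 0 < ε) :
    ∃ (nmid : ℕ) (φ : Fin n → ℝ → (Fin nmid → ℝ)) (fout : (Fin nmid → ℝ) → ℝ),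
      (∀ j : Fin n, ∃ (N : ℕ) (c : Fin N → Fin nmid → ℝ) (w h : Fin N → ℝ),
        ∀ (t : ℝ) (k : Fin nmid), φ j t k = ∑ i : Fin N, c i k * σ (w i * t + h i)) ∧
      (∃ (N : ℕ) (c : Fin N → ℝ) (w : Fin N → Fin nmid → ℝ) (h : Fin N → ℝ),
        ∀ y : Fin nmid → ℝ,
          fout y = ∑ i : Fin N, c i * σ ((∑ j : Fin nmid, w i j * y j) + h i)) ∧
      (∀ x ∈ V,
        |f x - fout (∑ g : G, ∏ j : Fin n, φ j (x ((g : Equiv.Perm (Fin n)) j)))| < ε) :=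
  G_invariant_network_universal_general hσc hσp hVc (fun g : G => hVstable g g.2) hf
    (fun g => hfinv g g.2) hε
end
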